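/- arXiv:2308.08868 — 3 statements merged into one kernel-verified Lean document; each statement's English description precedes it below -/
import Mathlib

section
/- Let G be a finite simple graph that is d-degenerate. Then the VC-dimension of G is at most d + 1. -/
/-- A set `S` of vertices is *shattered* in `G` if every subset `X ⊆ S` is the
intersection of `S` with the neighbourhood of some vertex. -/
def SimpleGraph.Shattered {V : Type*} (G : SimpleGraph V) (S : Set V) : Prop :=
  ∀ X ⊆ S, ∃ w : V, G.neighborSet w ∩ S = X

/-- A graph is `d`-degenerate if it admits a linear order on its vertices in which
every vertex has at most `d` neighbours preceding it. -/
def SimpleGraph.Degenerate {V : Type*} (G : SimpleGraph V) (d : ℕ) : Prop :=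
  ∃ lo : LinearOrder V, ∀ v : V, {u : V | G.Adj u v ∧ lo.lt u v}.ncard ≤ d

/-!
If `S` is shattered, every `t ∈ S` has a vertex `w t` whose neighbours in `S` are exactly the
elements of `S \ {t}`. In the subgraph induced on `S ∪ w '' S` each vertex therefore has at least
`|S| - 1` neighbours: `w t` is adjacent to `S \ {t}`, and `s ∈ S` is adjacent to `w '' (S \ {s})`.
For the largest vertex of this subgraph all these neighbours are left neighbours.
-/

/-- The left neighbourhood `N⁻(v)`: the neighbours of `v` preceding it. -/
def leftNeighborSet {V : Type*} [LT V] (G : SimpleGraph V) (v : V) : Set V :=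
  {u | G.Adj u v ∧ u < v}

/-- The vertices `w t`, for `t ∈ S`, form a *co-matching* with `S`: each `w t` is adjacent to all
elements of `S` except `t`. The sets `S` and `w '' S` may overlap. -/
def IsComatching {V : Type*} (G : SimpleGraph V) (S : Set V) (w : V → V) : Prop :=
  ∀ s ∈ S, ∀ t ∈ S, G.Adj s (w t) ↔ s ≠ t

section Comatching

variable {V : Type*} {G : SimpleGraph V} {S T : Set V} {w : V → V}

theorem exists_isComatching_of_shattered (hS : G.Shattered S) : ∃ w, IsComatching G S w := by
  choose w hw using fun t ↦ hS (S \ {t}) Set.sdiff_subset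
  refine ⟨w, fun s hs t _ ↦ ?_⟩
  have mem_iff : s ∈ G.neighborSet (w t) ∩ S ↔ s ∈ S \ {t} := by rw [hw t]
  simpa [hs, G.adj_comm s] using mem_iff

namespace IsComatching

theorem mono (hw : IsComatching G S w) (hTS : T ⊆ S) : IsComatching G T w :=
  fun s hs t ht ↦ hw s (hTS hs) t (hTS ht)

theorem injOn (hw : IsComatching G S w) : Set.InjOn w S := by
  intro s hs t ht hst
  by_contra hne
  have not_adj : ¬ G.Adj s (w s) := fun h ↦ (hw s hs s hs).1 h rfl
  exact not_adj (hst ▸ (hw s hs t ht).2 hne)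

theorem sdiff_singleton_subset_neighborSet (hw : IsComatching G S w) {t : V} (ht : t ∈ S) :
    S \ {t} ⊆ G.neighborSet (w t) :=
  fun s ⟨hs, hst⟩ ↦ ((hw s hs t ht).2 hst).symm

theorem image_sdiff_singleton_subset_neighborSet (hw : IsComatching G S w) {s : V} (hs : s ∈ S) :
    w '' (S \ {s}) ⊆ G.neighborSet s := by
  rintro _ ⟨t, ⟨ht, hts⟩, rfl⟩
  exact (hw s hs t ht).2 (Ne.symm hts)

theorem encard_le_encard_neighborSet_inter_add_one (hw : IsComatching G S w) {x : V}
    (hx : x ∈ S ∪ w '' S) : S.encard ≤ (G.neighborSet x ∩ (S ∪ w '' S)).encard + 1 := by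
  rcases hx with hx | ⟨t, ht, rfl⟩
  · have subset : w '' (S \ {x}) ⊆ G.neighborSet x ∩ (S ∪ w '' S) :=
      Set.subset_inter (hw.image_sdiff_singleton_subset_neighborSet hx)
        ((Set.image_mono Set.sdiff_subset).trans Set.subset_union_right)
    calc S.encard = (w '' (S \ {x})).encard + 1 := by
          rw [(hw.injOn.mono Set.sdiff_subset).encard_image,
            Set.encard_sdiff_singleton_add_one hx]
      _ ≤ _ := by gcongr
  · have subset : S \ {t} ⊆ G.neighborSet (w t) ∩ (S ∪ w '' S) :=
      Set.subset_inter (hw.sdiff_singleton_subset_neighborSet ht)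
        (Set.sdiff_subset.trans Set.subset_union_left)
    calc S.encard = (S \ {t}).encard + 1 := (Set.encard_sdiff_singleton_add_one ht).symm
      _ ≤ _ := by gcongr

end IsComatching

end Comatching

section LeftNeighborSet

variable {V : Type*} [LinearOrder V] {G : SimpleGraph V} {S U : Set V} {w : V → V} {d : ℕ∞}

theorem exists_neighborSet_inter_subset_leftNeighborSet (G : SimpleGraph V) (hU : U.Finite)
    (hne : U.Nonempty) : ∃ m ∈ U, G.neighborSet m ∩ U ⊆ leftNeighborSet G m := by
  obtain ⟨m, hm, hmax⟩ := Set.exists_max_image U id hU hne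
  exact ⟨m, hm, fun u ⟨hadj, hu⟩ ↦ ⟨hadj.symm, (hmax u hu).lt_of_ne hadj.ne'⟩⟩

theorem IsComatching.encard_le_of_finite (hw : IsComatching G S w) (hS : S.Finite)
    (hd : ∀ v, (leftNeighborSet G v).encard ≤ d) : S.encard ≤ d + 1 := by
  rcases S.eq_empty_or_nonempty with rfl | hne
  · simp
  obtain ⟨m, hm, hleft⟩ := exists_neighborSet_inter_subset_leftNeighborSet G
    (hS.union (hS.image w)) hne.inl
  calc S.encard ≤ (G.neighborSet m ∩ (S ∪ w '' S)).encard + 1 :=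
        hw.encard_le_encard_neighborSet_inter_add_one hm
    _ ≤ (leftNeighborSet G m).encard + 1 := by gcongr
    _ ≤ d + 1 := by gcongr; exact hd m

theorem IsComatching.encard_le (hw : IsComatching G S w)
    (hd : ∀ v, (leftNeighborSet G v).encard ≤ d) : S.encard ≤ d + 1 := by
  refine ENat.forall_natCast_le_iff_le.1 fun n hn ↦ ?_
  obtain ⟨T, hTS, hT⟩ := Set.exists_subset_encard_eq hn
  exact hT ▸ (hw.mono hTS).encard_le_of_finite (Set.finite_of_encard_eq_coe hT) hd

end LeftNeighborSet

theorem vc_le_degeneracy_succ_general {V : Type*} [LinearOrder V] {G : SimpleGraph V} {d : ℕ∞}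
    (hd : ∀ v, (leftNeighborSet G v).encard ≤ d) {S : Set V} (hS : G.Shattered S) :
    S.encard ≤ d + 1 := by
  obtain ⟨w, hw⟩ := exists_isComatching_of_shattered hS
  exact hw.encard_le hd

/-- If `G` is `d`-degenerate, then its VC-dimension is at most `d + 1`, i.e.
every shattered set of vertices has size at most `d + 1`. -/
theorem vc_le_degeneracy_succ {V : Type*} [Fintype V] (G : SimpleGraph V) (d : ℕ)
    (hdeg : G.Degenerate d) (S : Set V) (hS : G.Shattered S) :
    S.ncard ≤ d + 1 := by
  obtain ⟨lo, hlo⟩ := hdeg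
  have encard_le : S.encard ≤ (d : ℕ∞) + 1 := vc_le_degeneracy_succ_general
    (fun v ↦ Set.encard_le_coe_iff_finite_ncard_le.2 ⟨Set.toFinite _, hlo v⟩) hS
  exact (Set.encard_le_coe_iff_finite_ncard_le.1 encard_le).2
end

section
/- Let G be a finite simple graph and let S be a set of vertices shattered in G with |S| = s ≥ 1. Then there exists a nonempty set U of vertices of G such that the subgraph of G induced on U has minimum degree at least s − 1. -/
/-! If `w y` is a vertex whose neighbourhood cuts `S` in `S \ {y}`, then `S ∪ w '' S` works:
`w y` is adjacent to all of `S` but `y`, and `u ∈ S` is adjacent to all `w y` with `y ≠ u`,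
which are distinct because their traces on `S` are. -/

section CosingletonTraces

variable {V : Type*} {G : SimpleGraph V} {S : Set V} {w : V → V}

theorem injOn_of_neighborSet_inter_eq_sdiff_singleton
    (hw : ∀ y ∈ S, G.neighborSet (w y) ∩ S = S \ {y}) : S.InjOn w := by
  intro y hy z hz hyz
  have htrace : S \ {y} = S \ {z} := by rw [← hw y hy, hyz, hw z hz]
  by_contra hne
  have hmem : y ∈ S \ {y} := htrace ▸ ⟨hy, hne⟩
  exact hmem.2 rfl

theorem adj_of_neighborSet_inter_eq_sdiff_singleton {x y u : V}
    (hx : G.neighborSet x ∩ S = S \ {y}) (hu : u ∈ S) (hne : u ≠ y) : G.Adj x u :=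
  (hx.ge ⟨hu, hne⟩).1

theorem encard_sub_one_le_encard_image_inter_neighborSet
    (hw : ∀ y ∈ S, G.neighborSet (w y) ∩ S = S \ {y}) {u : V} (hu : u ∈ S) :
    S.encard - 1 ≤ (w '' S ∩ G.neighborSet u).encard := by
  have hinj : (S \ {u}).InjOn w :=
    (injOn_of_neighborSet_inter_eq_sdiff_singleton hw).mono Set.sdiff_subset
  have hsub : w '' (S \ {u}) ⊆ w '' S ∩ G.neighborSet u := by
    rintro _ ⟨y, ⟨hy, hne⟩, rfl⟩
    exact ⟨Set.mem_image_of_mem w hy,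
      (adj_of_neighborSet_inter_eq_sdiff_singleton (hw y hy) hu (Ne.symm hne)).symm⟩
  calc S.encard - 1 = (S \ {u}).encard := (Set.encard_sdiff_singleton_of_mem hu).symm
    _ = (w '' (S \ {u})).encard := hinj.encard_image.symm
    _ ≤ (w '' S ∩ G.neighborSet u).encard := Set.encard_le_encard hsub

theorem exists_induced_min_degree_of_shattered_general (hne : S.Nonempty)
    (hS : ∀ y ∈ S, ∃ x, G.neighborSet x ∩ S = S \ {y}) :
    ∃ U : Set V, U.Nonempty ∧ U.encard ≤ 2 * S.encard ∧
      ∀ u ∈ U, S.encard - 1 ≤ (U ∩ G.neighborSet u).encard := by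
  choose! w hw using hS
  refine ⟨S ∪ w '' S, hne.inl, ?_, ?_⟩
  · calc (S ∪ w '' S).encard ≤ S.encard + (w '' S).encard := Set.encard_union_le _ _
      _ ≤ S.encard + S.encard := add_le_add_right (Set.encard_image_le w S) _
      _ = 2 * S.encard := (two_mul _).symm
  · rintro u (hu | ⟨y, hy, rfl⟩)
    · calc S.encard - 1 ≤ (w '' S ∩ G.neighborSet u).encard :=
            encard_sub_one_le_encard_image_inter_neighborSet hw hu
        _ ≤ ((S ∪ w '' S) ∩ G.neighborSet u).encard := by
            gcongr; exact Set.subset_union_right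
    · calc S.encard - 1 = (S \ {y}).encard := (Set.encard_sdiff_singleton_of_mem hy).symm
        _ = (S ∩ G.neighborSet (w y)).encard := by rw [Set.inter_comm, hw y hy]
        _ ≤ ((S ∪ w '' S) ∩ G.neighborSet (w y)).encard := by
            gcongr; exact Set.subset_union_left

end CosingletonTraces

/-- If `S` is a shattered set of size `s ≥ 1` in `G`, then some nonempty set `U` of
vertices induces a subgraph of minimum degree at least `s - 1`. -/
theorem exists_induced_min_degree_of_shattered {V : Type*} [Fintype V]
    (G : SimpleGraph V) (S : Set V) (s : ℕ) (hs : 1 ≤ s) (hcard : S.ncard = s)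
    (hS : G.Shattered S) :
    ∃ U : Set V, U.Nonempty ∧ ∀ u ∈ U, s - 1 ≤ {v : V | v ∈ U ∧ G.Adj u v}.ncard := by
  have hne : S.Nonempty := Set.nonempty_of_ncard_ne_zero (by lia)
  obtain ⟨U, hU, -, hdeg⟩ := exists_induced_min_degree_of_shattered_general hne
    fun y _ => hS (S \ {y}) Set.sdiff_subset
  refine ⟨U, hU, fun u hu => ?_⟩
  change s - 1 ≤ (U ∩ G.neighborSet u).ncard
  have hdeg_u := hdeg u hu
  rw [← S.toFinite.cast_ncard_eq, hcard, ← (Set.toFinite _).cast_ncard_eq] at hdeg_u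
  exact_mod_cast hdeg_u
end

section
/- Let d ≥ 2, let G be a finite simple graph with vertex set V equipped with a linear order < of left-degree at most d, set p = ⌈log₂ d⌉ + 1, let S ⊆ V be shattered in G with |S| = t > p, and let c be an integer with 1 ≤ c ≤ p. Then there exist c vertices w_1,…,w_c ∈ V such that the set (N⁻(w_1) ∪ ⋯ ∪ N⁻(w_c)) ∩ S is shattered in G and has size at least c·t/p. -/
/-!
Fix `m ∈ S` and a set `T ⊆ S \ {m}` of `p` elements. The `2 ^ p - 1` sets `S \ Z` with `Z ⊊ T` all
contain `m`, so distinct ones are traces on `S` of distinct neighbours of `m`. At most `d` of these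
neighbours lie to the left of `m`, and `d + 1 < 2 ^ p`, so some `w > m` adjacent to `m` sees all but
at most `p - 1` elements of `S`. For `m = max S` those elements lie in the left neighbourhood of
`w`. Each further vertex, chosen in the same way for an element `m` not yet covered, covers at least
one more. Thus `c` vertices miss at most `p - c` elements, and `t - (p - c) ≥ c * t / p` because
`(t - p) * (p - c) ≥ 0`.
-/

theorem shattered_mono {V : Type*} {G : SimpleGraph V} {S T : Set V} (hS : G.Shattered S)
    (hTS : T ⊆ S) : G.Shattered T := by
  intro X hX
  obtain ⟨w, hw⟩ := hS X (hX.trans hTS)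
  refine ⟨w, ?_⟩
  rw [← Set.inter_eq_right.2 hTS, ← Set.inter_assoc, hw, Set.inter_eq_left.2 hX]

theorem exists_large_subsets_card_eq_two_pow_sub_one {α : Type*} {S : Finset α} {m : α} {p : ℕ}
    (hm : m ∈ S) (hp : p < S.card) :
    ∃ F : Finset (Finset α), F.card = 2 ^ p - 1 ∧
      ∀ Y ∈ F, Y ⊆ S ∧ m ∈ Y ∧ S.card < Y.card + p := by
  classical
  obtain ⟨T, hT, hTp⟩ : ∃ T ⊆ S.erase m, T.card = p :=
    Finset.exists_subset_card_eq (by rw [Finset.card_erase_of_mem hm]; omega)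
  have hTS : T ⊆ S := hT.trans (S.erase_subset m)
  have hinv : Set.LeftInvOn (S \ ·) (S \ ·) (Finset.Iio T : Set (Finset α)) := fun Z hZ =>
    Finset.sdiff_sdiff_eq_self ((Finset.mem_Iio.1 hZ).le.trans hTS)
  refine ⟨(Finset.Iio T).image (S \ ·), ?_, Finset.forall_mem_image.2 fun Z hZ => ?_⟩
  · rw [Finset.card_image_of_injOn hinv.injOn, Finset.card_Iio_finset, hTp]
  · have hZT : Z ⊂ T := Finset.mem_Iio.1 hZ
    have hmZ : m ∉ Z := fun h => Finset.notMem_erase m S (hT (hZT.subset h))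
    have hcard := Finset.card_sdiff_add_card_eq_card (hZT.subset.trans hTS)
    have hlt := Finset.card_lt_card hZT
    exact ⟨Finset.sdiff_subset, Finset.mem_sdiff.2 ⟨hm, hmZ⟩, by omega⟩

section LeftDegree

variable {V : Type*} [LinearOrder V] {G : SimpleGraph V} {d p : ℕ}

theorem exists_gt_neighborSet_inter_mem {S : Set V} (hS : G.Shattered S) {m : V} {F : Set (Set V)}
    (hF : ∀ Y ∈ F, Y ⊆ S ∧ m ∈ Y) (hlt : (leftNeighborSet G m).encard < F.encard) :
    ∃ w > m, G.neighborSet w ∩ S ∈ F := by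
  have : Nonempty V := ⟨m⟩
  choose! f hf using fun Y hY => hS Y (hF Y hY).1
  by_contra! hright
  have hinj : Set.InjOn f F := fun Y hY Z hZ h => by rw [← hf Y hY, h, hf Z hZ]
  have hmaps : Set.MapsTo f F (leftNeighborSet G m) := fun Y hY => by
    have hadj : G.Adj (f Y) m := ((hf Y hY).symm ▸ (hF Y hY).2 : m ∈ G.neighborSet (f Y) ∩ S).1
    have hle : f Y ≤ m := not_lt.1 fun h => hright (f Y) h ((hf Y hY).symm ▸ hY)
    exact ⟨hadj, hle.lt_of_ne hadj.ne⟩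
  exact (Set.encard_le_encard_of_injOn hmaps hinj).not_gt hlt

variable {S : Finset V}

theorem exists_gt_adj_card_lt (hS : G.Shattered (S : Set V)) {m : V} (hm : m ∈ S)
    (hdeg : (leftNeighborSet G m).encard ≤ d) (hdp : d + 1 < 2 ^ p) (hpS : p < S.card) :
    ∃ w > m, G.Adj m w ∧ S.card < (G.neighborSet w ∩ S).ncard + p := by
  obtain ⟨F, hFcard, hF⟩ := exists_large_subsets_card_eq_two_pow_sub_one hm hpS
  have hlt : (leftNeighborSet G m).encard < ((↑) '' (F : Set (Finset V)) : Set (Set V)).encard := by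
    rw [Finset.coe_injective.encard_image, Set.encard_coe_eq_coe_finsetCard]
    exact hdeg.trans_lt (by exact_mod_cast (by omega : d < F.card))
  obtain ⟨w, hmw, Y, hY, hw⟩ := exists_gt_neighborSet_inter_mem hS
    (Set.forall_mem_image.2 fun Y hY => ⟨Finset.coe_subset.2 (hF Y hY).1, (hF Y hY).2.1⟩) hlt
  obtain ⟨-, hmY, hcard⟩ := hF Y hY
  have hadj : G.Adj w m := (hw ▸ hmY : m ∈ G.neighborSet w ∩ S).1
  exact ⟨w, hmw, hadj.symm, by rwa [← hw, Set.ncard_coe_finset]⟩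

theorem exists_card_lt_leftNeighborSet_inter (hS : G.Shattered (S : Set V))
    (hdeg : ∀ v ∈ S, (leftNeighborSet G v).encard ≤ d) (hdp : d + 1 < 2 ^ p) (hpS : p < S.card) :
    ∃ w, S.card < (leftNeighborSet G w ∩ S).ncard + p := by
  have hne : S.Nonempty := Finset.card_pos.1 (by omega)
  have hmax := S.max'_mem hne
  obtain ⟨w, hw, -, hcard⟩ := exists_gt_adj_card_lt hS hmax (hdeg _ hmax) hdp hpS
  have heq : leftNeighborSet G w ∩ S = G.neighborSet w ∩ S := Set.ext fun u =>
    and_congr_left fun hu => ⟨fun h => h.1.symm, fun h => ⟨h.symm, (S.le_max' u hu).trans_lt hw⟩⟩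
  exact ⟨w, heq ▸ hcard⟩

theorem exists_min_le_ncard_leftNeighborSet_union_inter (hS : G.Shattered (S : Set V))
    (hdeg : ∀ v ∈ S, (leftNeighborSet G v).encard ≤ d) (hdp : d + 1 < 2 ^ p) (hpS : p < S.card)
    (A : Set V) :
    ∃ w, min S.card ((A ∩ S).ncard + 1) ≤ ((leftNeighborSet G w ∪ A) ∩ S).ncard := by
  by_cases hSA : (S : Set V) ⊆ A
  · obtain ⟨v, -⟩ : S.Nonempty := Finset.card_pos.1 (by omega)
    refine ⟨v, ?_⟩
    rw [Set.inter_eq_right.2 (hSA.trans Set.subset_union_right), Set.ncard_coe_finset]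
    exact min_le_left _ _
  · obtain ⟨s, hs, hsA⟩ := Set.not_subset.1 hSA
    obtain ⟨w, hsw, hadj, -⟩ := exists_gt_adj_card_lt hS hs (hdeg s hs) hdp hpS
    have hssub : A ∩ S ⊂ (leftNeighborSet G w ∪ A) ∩ S :=
      (Set.ssubset_iff_of_subset (Set.inter_subset_inter_left _ Set.subset_union_right)).2
        ⟨s, ⟨Or.inl ⟨hadj, hsw⟩, hs⟩, fun h => hsA h.1⟩
    exact ⟨w, (min_le_right _ _).trans
      (Set.ncard_lt_ncard hssub (S.finite_toSet.inter_of_right _))⟩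

theorem exists_card_add_le_iUnion_leftNeighborSet_inter (hS : G.Shattered (S : Set V))
    (hdeg : ∀ v ∈ S, (leftNeighborSet G v).encard ≤ d) (hdp : d + 1 < 2 ^ p) (hpS : p < S.card)
    {c : ℕ} (hc : 1 ≤ c) (hcp : c ≤ p) :
    ∃ w : Fin c → V, S.card + c ≤ ((⋃ i, leftNeighborSet G (w i)) ∩ S).ncard + p := by
  induction c, hc using Nat.le_induction with
  | base =>
    obtain ⟨w, hw⟩ := exists_card_lt_leftNeighborSet_inter hS hdeg hdp hpS
    exact ⟨fun _ => w, by rwa [Set.iUnion_const]⟩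
  | succ c _ ih =>
    obtain ⟨w, hw⟩ := ih (by omega)
    obtain ⟨v, hv⟩ := exists_min_le_ncard_leftNeighborSet_union_inter hS hdeg hdp hpS
      (⋃ i, leftNeighborSet G (w i))
    have hunion : ⋃ i, leftNeighborSet G ((Fin.cons v w : Fin (c + 1) → V) i) =
        leftNeighborSet G v ∪ ⋃ i, leftNeighborSet G (w i) :=
      Set.iUnion_fin_add_one_eq_iUnion_succ _
    exact ⟨Fin.cons v w, by rw [hunion]; omega⟩

end LeftDegree

theorem mul_div_le_of_add_le_add {K : Type*} [Field K] [LinearOrder K] [IsStrictOrderedRing K]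
    {c p t n : K} (hc : 0 ≤ c) (hcp : c ≤ p) (hpt : p ≤ t) (h : t + c ≤ n + p) :
    c * t / p ≤ n := by
  have hp : 0 ≤ p := hc.trans hcp
  have hn : 0 ≤ n := by linarith
  refine div_le_of_le_mul₀ hp hn ?_
  calc c * t ≤ c * t + (t - p) * (p - c) :=
        le_add_of_nonneg_right (mul_nonneg (sub_nonneg.2 hpt) (sub_nonneg.2 hcp))
    _ = (t + c - p) * p := by ring
    _ ≤ n * p := mul_le_mul_of_nonneg_right (sub_le_iff_le_add.2 h) hp

theorem add_one_lt_two_pow_clog_add_one {d : ℕ} (hd : 2 ≤ d) : d + 1 < 2 ^ (Nat.clog 2 d + 1) := by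
  have h : d ≤ 2 ^ Nat.clog 2 d := Nat.le_pow_clog one_lt_two d
  omega

theorem shattered_approx_general {V : Type*} [LinearOrder V] {G : SimpleGraph V} {S : Set V}
    (hS : G.Shattered S) {d p c : ℕ} (hdeg : ∀ v ∈ S, (leftNeighborSet G v).encard ≤ d)
    (hdp : d + 1 < 2 ^ p) (hpS : p < S.ncard) (hc : 1 ≤ c) (hcp : c ≤ p) :
    ∃ w : Fin c → V,
      G.Shattered ((⋃ i, leftNeighborSet G (w i)) ∩ S) ∧
      (c * S.ncard : ℚ) / p ≤ ((⋃ i, leftNeighborSet G (w i)) ∩ S).ncard := by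
  lift S to Finset V using Set.finite_of_ncard_pos (p.zero_le.trans_lt hpS)
  rw [Set.ncard_coe_finset] at hpS ⊢
  obtain ⟨w, hw⟩ := exists_card_add_le_iUnion_leftNeighborSet_inter hS hdeg hdp hpS hc hcp
  exact ⟨w, shattered_mono hS Set.inter_subset_right, mul_div_le_of_add_le_add c.cast_nonneg
    (mod_cast hcp) (mod_cast hpS.le) (mod_cast hw)⟩

/-- If `G` carries a linear order of left-degree at most `d ≥ 2`, `S` is a shattered set
of size `t > p` where `p = ⌈log₂ d⌉ + 1`, and `1 ≤ c ≤ p`, then there are `c` vertices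
whose left neighbourhoods intersect `S` in a shattered set of size at least `c·t/p`. -/
theorem shattered_approx {V : Type*} [Fintype V] (G : SimpleGraph V)
    (d : ℕ) (hd : 2 ≤ d) (lo : LinearOrder V)
    (hdeg : ∀ v : V, {u : V | G.Adj u v ∧ lo.lt u v}.ncard ≤ d)
    (S : Set V) (hS : G.Shattered S) (t : ℕ) (ht : S.ncard = t)
    (htp : Nat.clog 2 d + 1 < t)
    (c : ℕ) (hc1 : 1 ≤ c) (hcp : c ≤ Nat.clog 2 d + 1) :
    ∃ w : Fin c → V,
      G.Shattered ((⋃ i, {u : V | G.Adj u (w i) ∧ lo.lt u (w i)}) ∩ S) ∧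
      (c * t : ℚ) / (Nat.clog 2 d + 1 : ℕ) ≤
        ((⋃ i, {u : V | G.Adj u (w i) ∧ lo.lt u (w i)}) ∩ S).ncard := by
  subst ht
  exact shattered_approx_general hS
    (fun v _ => (Set.toFinite _).cast_ncard_eq.symm.trans_le (mod_cast hdeg v))
    (add_one_lt_two_pow_clog_add_one hd) htp hc1 hcp
end
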